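/- arXiv:2312.13922 — 5 statements merged into one kernel-verified Lean document; each statement's English description precedes it below -/
import Mathlib

section
/- Let ε_1, …, ε_n be independent Rademacher random variables. For every n ≥ 1 and every real p ≥ 1, the function Φ(t_1, …, t_n) = log E|e^{t_1}ε_1 + … + e^{t_n}ε_n|^p is convex on ℝ^n. -/
open Finset

/-- p-th moment of the Rademacher sum -/
noncomputable def radM (n : ℕ) (p : ℝ) (x : Fin n → ℝ) : ℝ :=
  (2 ^ n : ℝ)⁻¹ * ∑ s : Fin n → Bool, |∑ j, x j * (if s j then (1 : ℝ) else -1)| ^ p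

lemma radM_convex (n : ℕ) (p : ℝ) (hp : 1 ≤ p) (x y : Fin n → ℝ) (a b : ℝ)
    (ha : 0 ≤ a) (hb : 0 ≤ b) (hab : a + b = 1) :
    radM n p (a • x + b • y) ≤ a * radM n p x + b * radM n p y := by
  unfold radM
  have : ∀ s : Fin n → Bool,
      |∑ j, (a • x + b • y) j * (if s j then (1 : ℝ) else -1)| ^ p ≤
      a * |∑ j, x j * (if s j then (1 : ℝ) else -1)| ^ p
      + b * |∑ j, y j * (if s j then (1 : ℝ) else -1)| ^ p := by
    intro s
    set u := ∑ j, x j * (if s j then (1 : ℝ) else -1) with hu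
    set v := ∑ j, y j * (if s j then (1 : ℝ) else -1) with hv
    have h1 : ∑ j, (a • x + b • y) j * (if s j then (1 : ℝ) else -1) = a * u + b * v := by
      rw [hu, hv, mul_sum, mul_sum, ← sum_add_distrib]
      refine sum_congr rfl fun j _ => ?_
      simp only [Pi.add_apply, Pi.smul_apply, smul_eq_mul]
      ring
    rw [h1]
    have h2 : |a * u + b * v| ≤ a * |u| + b * |v| := by
      refine (abs_add_le _ _).trans ?_
      rw [abs_mul, abs_mul, abs_of_nonneg ha, abs_of_nonneg hb]
    have h3 := (convexOn_rpow hp).2 (abs_nonneg u : |u| ∈ Set.Ici 0)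
      (abs_nonneg v : |v| ∈ Set.Ici 0) ha hb hab
    simp only [smul_eq_mul] at h3
    exact (Real.rpow_le_rpow (abs_nonneg _) h2 (by linarith)).trans h3
  have h4 := sum_le_sum fun s (_ : s ∈ (univ : Finset (Fin n → Bool))) => this s
  rw [sum_add_distrib, ← mul_sum, ← mul_sum] at h4
  have h5 := mul_le_mul_of_nonneg_left h4 (by positivity : (0 : ℝ) ≤ (2 ^ n : ℝ)⁻¹)
  refine h5.trans (le_of_eq ?_)
  ring

lemma radM_flip (n : ℕ) (p : ℝ) (x : Fin n → ℝ) (i : Fin n) (d : ℝ) :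
    radM n p (Function.update x i (-d)) = radM n p (Function.update x i d) := by
  unfold radM
  congr 1
  have hinv : Function.Involutive
      (fun s : Fin n → Bool => Function.update s i (!(s i))) := by
    intro s
    simp
  rw [← Equiv.sum_comp hinv.toPerm]
  refine sum_congr rfl fun s _ => ?_
  congr 2
  refine sum_congr rfl fun j _ => ?_
  simp only [Function.Involutive.coe_toPerm]
  by_cases h : j = i
  · subst h
    rcases Bool.eq_false_or_eq_true (s j) with hs | hs <;> simp [hs]
  · simp [Function.update_of_ne h]

lemma radM_step (n : ℕ) (p : ℝ) (hp : 1 ≤ p) (x : Fin n → ℝ) (i : Fin n) (c : ℝ)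
    (hc : 0 ≤ c) (hcd : c ≤ x i) : radM n p (Function.update x i c) ≤ radM n p x := by
  rcases eq_or_lt_of_le (hc.trans hcd) with h0 | h0
  · have : c = x i := by linarith
    rw [this, Function.update_eq_self]
  · have h := radM_convex n p hp (Function.update x i (x i)) (Function.update x i (-(x i)))
      ((1 + c / x i) / 2) ((1 - c / x i) / 2) (by positivity)
      (by have := (div_le_one h0).2 hcd; linarith) (by ring)
    rw [radM_flip, Function.update_eq_self] at h
    have e : ((1 + c / x i) / 2) • x + ((1 - c / x i) / 2) • Function.update x i (-(x i))
        = Function.update x i c := by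
      ext j
      by_cases hj : j = i
      · subst hj
        simp
        field_simp
        ring
      · simp [Function.update_of_ne hj]
        ring
    rw [e] at h
    linarith

lemma radM_mono (n : ℕ) (p : ℝ) (hp : 1 ≤ p) (x y : Fin n → ℝ)
    (h0 : ∀ i, 0 ≤ x i) (hxy : ∀ i, x i ≤ y i) : radM n p x ≤ radM n p y := by
  have : ∀ S : Finset (Fin n), radM n p (S.piecewise x y) ≤ radM n p y := by
    intro S
    induction S using Finset.induction_on with
    | empty => simp
    | insert i S hi ih =>
      rw [Finset.piecewise_insert]
      refine (radM_step n p hp _ i _ (h0 i) ?_).trans ih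
      rw [Finset.piecewise_eq_of_notMem _ _ _ hi]
      exact hxy i
  simpa using this univ

lemma radM_pos (n : ℕ) (hn : 1 ≤ n) (p : ℝ) (t : Fin n → ℝ) :
    0 < radM n p (fun j => Real.exp (t j)) := by
  unfold radM
  refine mul_pos (by positivity) ?_
  refine sum_pos' (fun s _ => by positivity) ⟨fun _ => true, mem_univ _, ?_⟩
  have : Nonempty (Fin n) := ⟨⟨0, hn⟩⟩
  have : 0 < ∑ j : Fin n, Real.exp (t j) :=
    sum_pos (fun j _ => Real.exp_pos _) univ_nonempty
  simp only [if_true, mul_one]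
  exact Real.rpow_pos_of_pos (abs_pos.2 this.ne') _

lemma radM_shift (n : ℕ) (p : ℝ) (t : Fin n → ℝ) (a : ℝ) :
    radM n p (fun j => Real.exp (t j + a))
      = Real.exp (p * a) * radM n p (fun j => Real.exp (t j)) := by
  unfold radM
  rw [mul_left_comm]
  congr 1
  rw [mul_sum]
  refine sum_congr rfl fun s _ => ?_
  have : ∑ j, Real.exp (t j + a) * (if s j then (1 : ℝ) else -1)
      = Real.exp a * ∑ j, Real.exp (t j) * (if s j then (1 : ℝ) else -1) := by
    rw [mul_sum]
    refine sum_congr rfl fun j _ => ?_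
    rw [Real.exp_add]
    ring
  rw [this, abs_mul, Real.mul_rpow (abs_nonneg _) (abs_nonneg _), Real.abs_exp,
    ← Real.exp_mul, mul_comm a p]

/-- For independent Rademacher signs `ε_1, …, ε_n` (modelled by the uniform measure on
`{-1,1}^n`, encoded via `Fin n → Bool`) and `p ≥ 1`, the function
`Φ(t) = log E|e^{t_1}ε_1 + … + e^{t_n}ε_n|^p` is convex on `ℝ^n`. -/
theorem log_moment_rademacher_convex (n : ℕ) (hn : 1 ≤ n) (p : ℝ) (hp : 1 ≤ p) :
    ConvexOn ℝ Set.univ (fun t : Fin n → ℝ =>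
      Real.log ((2 ^ n : ℝ)⁻¹ *
        ∑ s : Fin n → Bool,
          |∑ j, Real.exp (t j) * (if s j then (1 : ℝ) else -1)| ^ p)) := by
  refine ⟨convex_univ, ?_⟩
  intro x _ y _ l m hl hm hlm
  change Real.log (radM n p (fun j => Real.exp ((l • x + m • y) j)))
    ≤ l * Real.log (radM n p (fun j => Real.exp (x j)))
      + m * Real.log (radM n p (fun j => Real.exp (y j)))
  have hp0 : p ≠ 0 := by linarith
  have norm1 : ∀ t : Fin n → ℝ, radM n p (fun j => Real.exp
      (t j + -(Real.log (radM n p (fun j => Real.exp (t j))) / p))) = 1 := by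
    intro t
    have hpos := radM_pos n hn p t
    rw [radM_shift, mul_neg, mul_div_cancel₀ _ hp0, Real.exp_neg, Real.exp_log hpos,
      inv_mul_cancel₀ hpos.ne']
  have hx := norm1 x
  have hy := norm1 y
  set A := Real.log (radM n p (fun j => Real.exp (x j))) with hA
  set B := Real.log (radM n p (fun j => Real.exp (y j))) with hB
  rw [Real.log_le_iff_le_exp (radM_pos n hn p _)]
  have e : (fun j => Real.exp ((l • x + m • y) j)) = fun j => Real.exp
      ((l * (x j + -(A / p)) + m * (y j + -(B / p))) + (l * A + m * B) / p) := by
    ext j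
    simp only [Pi.add_apply, Pi.smul_apply, smul_eq_mul]
    congr 1
    ring
  rw [e, radM_shift n p (fun j => l * (x j + -(A / p)) + m * (y j + -(B / p))),
    mul_div_cancel₀ _ hp0]
  have hle : radM n p (fun j => Real.exp (l * (x j + -(A / p)) + m * (y j + -(B / p)))) ≤ 1 := by
    refine (radM_mono n p hp _ (l • (fun j => Real.exp (x j + -(A / p)))
      + m • (fun j => Real.exp (y j + -(B / p)))) (fun i => (Real.exp_pos _).le) ?_).trans ?_
    · intro i
      have := convexOn_exp.2 (Set.mem_univ (x i + -(A / p))) (Set.mem_univ (y i + -(B / p)))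
        hl hm hlm
      simpa using this
    · refine (radM_convex n p hp _ _ l m hl hm hlm).trans ?_
      rw [hx, hy]
      linarith
  calc _ ≤ Real.exp (l * A + m * B) * 1 :=
        mul_le_mul_of_nonneg_left hle (Real.exp_pos _).le
    _ = _ := mul_one _
end

section
/- Let ε_1, …, ε_n be independent Rademacher random variables, let p ≥ 1, and for t ∈ ℝ^n set X_t = Σ_{j=1}^n e^{t_j} ε_j. Then for every t ∈ ℝ^n and every j ∈ {1,…,n}, E[ sgn(X_t) |X_t|^{p-1} ε_j ] ≥ 0. -/
open Finset

theorem aux_mono (q : ℝ) (hq : 0 ≤ q) (x y : ℝ) (h : x ≤ y) :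
    Real.sign x * |x| ^ q ≤ Real.sign y * |y| ^ q := by
  rcases lt_trichotomy x 0 with hx | hx | hx <;> rcases lt_trichotomy y 0 with hy | hy | hy
  · rw [Real.sign_of_neg hx, Real.sign_of_neg hy]
    have : |y| ^ q ≤ |x| ^ q := by
      apply Real.rpow_le_rpow (abs_nonneg _) _ hq
      rw [abs_of_neg hx, abs_of_neg hy]; linarith
    linarith
  · rw [Real.sign_of_neg hx, hy, Real.sign_zero]
    have : 0 ≤ |x| ^ q := by positivity
    linarith
  · rw [Real.sign_of_neg hx, Real.sign_of_pos hy]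
    have : 0 ≤ |x| ^ q := by positivity
    have : 0 ≤ |y| ^ q := by positivity
    linarith
  · linarith
  · rw [hx, hy]
  · rw [hx, Real.sign_zero, Real.sign_of_pos hy]
    have : 0 ≤ |y| ^ q := by positivity
    linarith
  · linarith
  · linarith
  · rw [Real.sign_of_pos hx, Real.sign_of_pos hy]
    have : |x| ^ q ≤ |y| ^ q := by
      apply Real.rpow_le_rpow (abs_nonneg _) _ hq
      rw [abs_of_pos hx, abs_of_pos hy]; linarith
    linarith

theorem aux_flip {n : ℕ} (j : Fin n) (F : (Fin n → Bool) → ℝ)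
    (h : ∀ s, 0 ≤ F s + F (Function.update s j (!s j))) : 0 ≤ ∑ s, F s := by
  have hinv : Function.Involutive (fun s : Fin n → Bool => Function.update s j (!s j)) := by
    intro s; simp
  have e : ∑ s, F (Function.update s j (!s j)) = ∑ s, F s :=
    Equiv.sum_comp hinv.toPerm F
  have h2 : 0 ≤ ∑ s, (F s + F (Function.update s j (!s j))) :=
    Finset.sum_nonneg fun s _ => h s
  rw [Finset.sum_add_distrib, e] at h2
  linarith

/-- For independent Rademacher signs `ε_1, …, ε_n` (modelled by the uniform measure on
`{-1,1}^n`, encoded via `Fin n → Bool`), `p ≥ 1` and `X_t = Σ_j e^{t_j} ε_j`, we have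
`E[sgn(X_t) |X_t|^{p-1} ε_j] ≥ 0` for every `t` and `j`. -/
theorem rademacher_sign_correlation_nonneg (n : ℕ) (p : ℝ) (hp : 1 ≤ p)
    (t : Fin n → ℝ) (j : Fin n) :
    0 ≤ (2 ^ n : ℝ)⁻¹ *
      ∑ s : Fin n → Bool,
        (Real.sign (∑ i, Real.exp (t i) * (if s i then (1 : ℝ) else -1)) *
            |∑ i, Real.exp (t i) * (if s i then (1 : ℝ) else -1)| ^ (p - 1)) *
          (if s j then (1 : ℝ) else -1) := by
  apply mul_nonneg (by positivity)
  apply aux_flip j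
  intro s
  have key : ∀ a b : Fin n → Bool, (∀ i, i ≠ j → a i = b i) → a j = false →
      ∑ i, Real.exp (t i) * (if a i then (1 : ℝ) else -1) ≤
      ∑ i, Real.exp (t i) * (if b i then (1 : ℝ) else -1) := by
    intro a b hab ha
    apply Finset.sum_le_sum
    intro i _
    apply mul_le_mul_of_nonneg_left _ (Real.exp_pos _).le
    by_cases hi : i = j
    · subst hi
      rw [ha]
      cases b i <;> norm_num
    · rw [hab i hi]
  have hne : ∀ i, i ≠ j → Function.update s j (!s j) i = s i :=
    fun i hi => Function.update_of_ne hi _ _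
  have hj : Function.update s j (!s j) j = !s j := Function.update_self _ _ _
  generalize Function.update s j (!s j) = u at hne hj
  cases hs : s j
  · have := aux_mono (p - 1) (by linarith) _ _ (key s u (fun i hi => (hne i hi).symm) hs)
    rw [hs] at hj
    rw [hj]
    simp only [Bool.not_false, if_true, Bool.false_eq_true, if_false]
    linarith
  · rw [hs] at hj
    have := aux_mono (p - 1) (by linarith) _ _ (key u s hne hj)
    rw [hj]
    simp only [Bool.not_true, if_true, Bool.false_eq_true, if_false]
    linarith
end

section
/- Let ε_1, …, ε_n be independent Rademacher random variables. The function t = (t_1,…,t_n) ↦ log E| e^{t_1}ε_1 + … + e^{t_n}ε_n | is convex on ℝ^n. -/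
open Finset

/-- Rademacher sign. -/
noncomputable def rsg (b : Bool) : ℝ := if b then 1 else -1

/-- Sign function. -/
noncomputable def sgf (x : ℝ) : ℝ := if 0 ≤ x then 1 else -1

lemma sgf_mul_self (x : ℝ) : sgf x * x = |x| := by
  unfold sgf; split_ifs with h
  · rw [abs_of_nonneg h, one_mul]
  · rw [abs_of_neg (not_le.1 h)]; ring

lemma sgf_mul_le (x y : ℝ) : sgf x * y ≤ |y| := by
  unfold sgf; split_ifs with h
  · rw [one_mul]; exact le_abs_self y
  · rw [neg_one_mul]; exact neg_le_abs y

lemma sgf_mono {x y : ℝ} (h : x ≤ y) : sgf x ≤ sgf y := by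
  unfold sgf; split_ifs <;> linarith

/-- Flip of one coordinate. -/
def flipAt {n : ℕ} (j : Fin n) (s : Fin n → Bool) : Fin n → Bool :=
  Function.update s j (!(s j))

lemma flipAt_invol {n : ℕ} (j : Fin n) : Function.Involutive (flipAt j) := by
  intro s; simp [flipAt]

lemma sum_flip {n : ℕ} (y : Fin n → ℝ) (j : Fin n) (s : Fin n → Bool) :
    ∑ i, y i * rsg (flipAt j s i) = (∑ i, y i * rsg (s i)) - 2 * (y j * rsg (s j)) := by
  rw [← Finset.add_sum_erase _ _ (Finset.mem_univ j),
    ← Finset.add_sum_erase univ (fun i => y i * rsg (s i)) (Finset.mem_univ j)]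
  have h : ∑ i ∈ univ.erase j, y i * rsg (flipAt j s i) = ∑ i ∈ univ.erase j, y i * rsg (s i) := by
    refine Finset.sum_congr rfl fun i hi => ?_
    simp [flipAt, Function.update_of_ne (Finset.ne_of_mem_erase hi)]
  rw [h]
  cases hs : s j <;> simp [flipAt, rsg, hs] <;> ring

lemma coef_nonneg {n : ℕ} (y : Fin n → ℝ) (hy : ∀ i, 0 ≤ y i) (j : Fin n) :
    0 ≤ ∑ s : Fin n → Bool, sgf (∑ i, y i * rsg (s i)) * rsg (s j) := by
  have h1 : ∑ s : Fin n → Bool, sgf (∑ i, y i * rsg (s i)) * rsg (s j)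
      = ∑ s : Fin n → Bool, sgf (∑ i, y i * rsg (flipAt j s i)) * rsg (flipAt j s j) :=
    (Equiv.sum_comp (flipAt_invol j).toPerm
      (fun s : Fin n → Bool => sgf (∑ i, y i * rsg (s i)) * rsg (s j))).symm
  have h2 : 0 ≤ ∑ s : Fin n → Bool, (sgf (∑ i, y i * rsg (s i)) * rsg (s j)
      + sgf (∑ i, y i * rsg (flipAt j s i)) * rsg (flipAt j s j)) := by
    refine Finset.sum_nonneg fun s _ => ?_
    rw [sum_flip]
    have := hy j
    cases hs : s j
    · have := sgf_mono (show (∑ i, y i * rsg (s i)) ≤ (∑ i, y i * rsg (s i)) - 2 * (y j * rsg false)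
        by simp [rsg]; linarith)
      simp [flipAt, rsg, hs] at this ⊢
      linarith
    · have := sgf_mono (show (∑ i, y i * rsg (s i)) - 2 * (y j * rsg true) ≤ (∑ i, y i * rsg (s i))
        by simp [rsg]; linarith)
      simp [flipAt, rsg, hs] at this ⊢
      linarith
  rw [Finset.sum_add_distrib, ← h1] at h2
  linarith

lemma coef_sum {n : ℕ} (y x : Fin n → ℝ) :
    ∑ j, (∑ s : Fin n → Bool, sgf (∑ i, y i * rsg (s i)) * rsg (s j)) * x j
      = ∑ s : Fin n → Bool, sgf (∑ i, y i * rsg (s i)) * ∑ j, x j * rsg (s j) := by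
  simp_rw [Finset.sum_mul, Finset.mul_sum]
  rw [Finset.sum_comm]
  refine Finset.sum_congr rfl fun s _ => Finset.sum_congr rfl fun j _ => by ring

lemma F_pos {n : ℕ} (hn : 0 < n) (t : Fin n → ℝ) :
    0 < ∑ s : Fin n → Bool, |∑ j, Real.exp (t j) * rsg (s j)| := by
  refine Finset.sum_pos' (fun _ _ => abs_nonneg _) ⟨fun _ => true, Finset.mem_univ _, ?_⟩
  haveI : Nonempty (Fin n) := ⟨⟨0, hn⟩⟩
  refine abs_pos.2 (ne_of_gt (Finset.sum_pos (fun j _ => ?_) Finset.univ_nonempty))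
  simp [rsg, Real.exp_pos]

lemma main_ineq {n : ℕ} (hn : 0 < n) (t u : Fin n → ℝ) (a b : ℝ) (ha : 0 ≤ a) (hb : 0 ≤ b)
    (hab : a + b = 1) :
    Real.log (∑ s : Fin n → Bool, |∑ j, Real.exp (a * t j + b * u j) * rsg (s j)|) ≤
      a * Real.log (∑ s : Fin n → Bool, |∑ j, Real.exp (t j) * rsg (s j)|)
      + b * Real.log (∑ s : Fin n → Bool, |∑ j, Real.exp (u j) * rsg (s j)|) := by
  have hA := F_pos hn t
  have hB := F_pos hn u
  have hY := F_pos hn (fun j => a * t j + b * u j)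
  set y : Fin n → ℝ := fun j => Real.exp (a * t j + b * u j) with hy
  set c : Fin n → ℝ := fun j => ∑ s : Fin n → Bool, sgf (∑ i, y i * rsg (s i)) * rsg (s j) with hc
  have hc0 : ∀ j, 0 ≤ c j := coef_nonneg y (fun i => (Real.exp_pos _).le)
  have hle : ∀ x : Fin n → ℝ, ∑ j, c j * x j ≤ ∑ s : Fin n → Bool, |∑ j, x j * rsg (s j)| := by
    intro x
    rw [hc, coef_sum]
    exact Finset.sum_le_sum fun s _ => sgf_mul_le _ _
  have heq : ∑ j, c j * y j = ∑ s : Fin n → Bool, |∑ j, y j * rsg (s j)| := by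
    rw [hc, coef_sum]
    exact Finset.sum_congr rfl fun s _ => sgf_mul_self _
  have hlt := hle (fun j => Real.exp (t j))
  have hlu := hle (fun j => Real.exp (u j))
  set A := ∑ s : Fin n → Bool, |∑ j, Real.exp (t j) * rsg (s j)|
  set B := ∑ s : Fin n → Bool, |∑ j, Real.exp (u j) * rsg (s j)|
  rw [Real.log_le_iff_le_exp hY]
  change ∑ s : Fin n → Bool, |∑ j, y j * rsg (s j)| ≤ _
  rw [← heq]
  set M := a * Real.log A + b * Real.log B with hM
  have key : ∀ j, y j ≤ Real.exp M * (a * (Real.exp (t j) / A) + b * (Real.exp (u j) / B)) := by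
    intro j
    have h := convexOn_exp.2 (Set.mem_univ (t j - Real.log A)) (Set.mem_univ (u j - Real.log B))
      ha hb hab
    simp only [smul_eq_mul, Real.exp_sub, Real.exp_log hA, Real.exp_log hB] at h
    calc y j = Real.exp M * Real.exp (a * (t j - Real.log A) + b * (u j - Real.log B)) := by
          rw [← Real.exp_add, hy, hM]; congr 1; ring
      _ ≤ _ := mul_le_mul_of_nonneg_left h (Real.exp_pos _).le
  calc ∑ j, c j * y j
      ≤ ∑ j, c j * (Real.exp M * (a * (Real.exp (t j) / A) + b * (Real.exp (u j) / B))) :=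
        Finset.sum_le_sum fun j _ => mul_le_mul_of_nonneg_left (key j) (hc0 j)
    _ = Real.exp M * (a * ((∑ j, c j * Real.exp (t j)) / A)
          + b * ((∑ j, c j * Real.exp (u j)) / B)) := by
        simp_rw [Finset.sum_div, Finset.mul_sum, ← Finset.sum_add_distrib, Finset.mul_sum]
        exact Finset.sum_congr rfl fun j _ => by ring
    _ ≤ Real.exp M * (a * 1 + b * 1) := by
        have h1 := (div_le_one hA).2 hlt
        have h2 := (div_le_one hB).2 hlu
        gcongr
    _ = Real.exp M := by rw [mul_one, mul_one, hab, mul_one]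

/-- For independent Rademacher signs `ε_1, …, ε_n` (modelled by the uniform measure on
`{-1,1}^n`, encoded via `Fin n → Bool`), the function
`t ↦ log E|e^{t_1}ε_1 + … + e^{t_n}ε_n|` is convex on `ℝ^n`. -/
theorem log_L1_rademacher_convex (n : ℕ) :
    ConvexOn ℝ Set.univ (fun t : Fin n → ℝ =>
      Real.log ((2 ^ n : ℝ)⁻¹ *
        ∑ s : Fin n → Bool,
          |∑ j, Real.exp (t j) * (if s j then (1 : ℝ) else -1)|)) := by
  refine ⟨convex_univ, fun t _ u _ a b ha hb hab => ?_⟩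
  rcases Nat.eq_zero_or_pos n with rfl | hn
  · simp
  have hK : ((2 ^ n : ℝ)⁻¹) ≠ 0 := by positivity
  change Real.log ((2 ^ n : ℝ)⁻¹ * ∑ s : Fin n → Bool,
      |∑ j, Real.exp (a * t j + b * u j) * rsg (s j)|) ≤
    a * Real.log ((2 ^ n : ℝ)⁻¹ * ∑ s : Fin n → Bool, |∑ j, Real.exp (t j) * rsg (s j)|)
    + b * Real.log ((2 ^ n : ℝ)⁻¹ * ∑ s : Fin n → Bool, |∑ j, Real.exp (u j) * rsg (s j)|)
  rw [Real.log_mul hK (F_pos hn t).ne', Real.log_mul hK (F_pos hn u).ne',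
    Real.log_mul hK (F_pos hn (fun j => a * t j + b * u j)).ne']
  have h := main_ineq hn t u a b ha hb hab
  have h3 : Real.log ((2 ^ n : ℝ)⁻¹) =
      a * Real.log ((2 ^ n : ℝ)⁻¹) + b * Real.log ((2 ^ n : ℝ)⁻¹) := by
    rw [← add_mul, hab, one_mul]
  linarith
end

section
/- Let ε_1, …, ε_n be independent Rademacher random variables, let H be a real Hilbert space with norm ‖·‖, let p ≥ 1 and let v_1, …, v_n be vectors in H. Then the function Φ(t_1, …, t_n) = log E‖ e^{t_1}ε_1 v_1 + … + e^{t_n}ε_n v_n ‖^p is convex on ℝ^n. -/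
open Finset

lemma aux_young {ι : Type*} (I : Finset ι) (p : ℝ) (hp : 1 ≤ p) (x y : ι → ℝ)
    (hx : ∀ i, 0 ≤ x i) (hy : ∀ i, 0 ≤ y i) (T A : ℝ) (hT : 0 < T) (hA : 0 < A)
    (hxT : ∑ i ∈ I, x i ^ p = T ^ p) (hyA : ∑ i ∈ I, y i ^ p = A ^ p) :
    ∑ i ∈ I, x i ^ (p - 1) * y i ≤ T ^ (p - 1) * A := by
  have hp0 : 0 < p := by linarith
  have key : ∀ i ∈ I, x i ^ (p - 1) * y i ≤
      T ^ (p - 1) * A * ((p - 1) / p * (x i ^ p / T ^ p) + 1 / p * (y i ^ p / A ^ p)) := by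
    intro i _
    have h := Real.geom_mean_le_arith_mean2_weighted (w₁ := (p - 1) / p) (w₂ := 1 / p)
      (p₁ := (x i / T) ^ p) (p₂ := (y i / A) ^ p)
      (div_nonneg (by linarith) hp0.le) (by positivity)
      (Real.rpow_nonneg (div_nonneg (hx i) hT.le) _)
      (Real.rpow_nonneg (div_nonneg (hy i) hA.le) _) (by field_simp; ring)
    rw [← Real.rpow_mul (div_nonneg (hx i) hT.le), ← Real.rpow_mul (div_nonneg (hy i) hA.le),
      mul_div_cancel₀ _ hp0.ne', mul_div_cancel₀ _ hp0.ne', Real.rpow_one,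
      Real.div_rpow (hx i) hT.le, Real.div_rpow (hx i) hT.le, Real.div_rpow (hy i) hA.le] at h
    have hT1 : 0 < T ^ (p - 1) := Real.rpow_pos_of_pos hT _
    calc x i ^ (p - 1) * y i = T ^ (p - 1) * A * (x i ^ (p - 1) / T ^ (p - 1) * (y i / A)) := by
          field_simp
      _ ≤ _ := mul_le_mul_of_nonneg_left h (by positivity)
  refine (Finset.sum_le_sum key).trans ?_
  rw [← Finset.mul_sum, Finset.sum_add_distrib, ← Finset.mul_sum, ← Finset.mul_sum,
    ← Finset.sum_div, ← Finset.sum_div, hxT, hyA]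
  have h1 : 0 < T ^ p := Real.rpow_pos_of_pos hT _
  have h2 : 0 < A ^ p := Real.rpow_pos_of_pos hA _
  rw [div_self h1.ne', div_self h2.ne']
  apply le_of_eq
  field_simp
  ring

lemma aux_norm {H : Type*} [NormedAddCommGroup H] [InnerProductSpace ℝ H]
    (p : ℝ) (a b : H) :
    inner ℝ (‖a‖ ^ (p - 2) • a) b ≤ ‖a‖ ^ (p - 1) * ‖b‖ := by
  rcases eq_or_ne a 0 with rfl | ha
  · simp only [smul_zero, inner_zero_left]; positivity
  · have h : 0 < ‖a‖ := norm_pos_iff.2 ha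
    rw [real_inner_smul_left]
    have : ‖a‖ ^ (p - 1) = ‖a‖ ^ (p - 2) * ‖a‖ := by
      rw [← Real.rpow_add_one h.ne']; congr 1; ring
    rw [this, mul_assoc]
    exact mul_le_mul_of_nonneg_left (real_inner_le_norm a b) (by positivity)

lemma aux_self {H : Type*} [NormedAddCommGroup H] [InnerProductSpace ℝ H]
    (p : ℝ) (hp : 1 ≤ p) (a : H) :
    inner ℝ (‖a‖ ^ (p - 2) • a) a = ‖a‖ ^ p := by
  rcases eq_or_ne a 0 with rfl | ha
  · simp [Real.zero_rpow (show p ≠ 0 by linarith)]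
  · have h : 0 < ‖a‖ := norm_pos_iff.2 ha
    rw [real_inner_smul_left, real_inner_self_eq_norm_sq, ← Real.rpow_natCast,
      ← Real.rpow_add h]
    congr 1; push_cast; ring

lemma aux_mono_s11 {H : Type*} [NormedAddCommGroup H] [InnerProductSpace ℝ H]
    (p : ℝ) (hp : 1 ≤ p) (a b : H) :
    0 ≤ inner ℝ (‖a‖ ^ (p - 2) • a - ‖b‖ ^ (p - 2) • b) (a - b) := by
  have e : ∀ c : H, ‖c‖ ^ p = ‖c‖ ^ (p - 1) * ‖c‖ := by
    intro c
    rcases eq_or_ne c 0 with rfl | hc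
    · simp [Real.zero_rpow (show p ≠ 0 by linarith)]
    · rw [← Real.rpow_add_one (norm_pos_iff.2 hc).ne']; congr 1; ring
  rw [inner_sub_left, inner_sub_right, inner_sub_right, aux_self p hp, aux_self p hp, e a, e b]
  have h1 := aux_norm p a b
  have h2 := aux_norm p b a
  have : 0 ≤ (‖a‖ ^ (p - 1) - ‖b‖ ^ (p - 1)) * (‖a‖ - ‖b‖) := by
    rcases le_total ‖a‖ ‖b‖ with h | h
    · exact mul_nonneg_of_nonpos_of_nonpos (sub_nonpos.2
        (Real.rpow_le_rpow (norm_nonneg _) h (by linarith))) (sub_nonpos.2 h)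
    · exact mul_nonneg (sub_nonneg.2
        (Real.rpow_le_rpow (norm_nonneg _) h (by linarith))) (sub_nonneg.2 h)
  linarith

lemma aux_flip_s11 {n : ℕ} {H : Type*} [NormedAddCommGroup H] [InnerProductSpace ℝ H]
    (v : Fin n → H) (t : Fin n → ℝ) (i : Fin n) (s : Fin n → Bool) :
    (∑ j, (Real.exp (t j) * (if s j then (1 : ℝ) else -1)) • v j) -
     (∑ j, (Real.exp (t j) * (if Function.update s i (!s i) j then (1 : ℝ) else -1)) • v j)
     = (2 * Real.exp (t i) * (if s i then (1 : ℝ) else -1)) • v i := by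
  rw [← Finset.sum_sub_distrib, Finset.sum_eq_single i]
  · rw [← sub_smul]
    congr 1
    cases h : s i <;> simp <;> ring
  · intro j _ hj
    simp [Function.update_of_ne hj]
  · simp

lemma aux_coef {n : ℕ} {H : Type*} [NormedAddCommGroup H] [InnerProductSpace ℝ H]
    (p : ℝ) (hp : 1 ≤ p) (v : Fin n → H) (t : Fin n → ℝ) (i : Fin n)
    (S : (Fin n → Bool) → H)
    (hS : ∀ s, S s = ∑ j, (Real.exp (t j) * (if s j then (1 : ℝ) else -1)) • v j) :
    0 ≤ ∑ s : Fin n → Bool, inner ℝ (‖S s‖ ^ (p - 2) • S s)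
      ((if s i then (1 : ℝ) else -1) • v i) := by
  set g : (Fin n → Bool) → ℝ := fun s => inner ℝ (‖S s‖ ^ (p - 2) • S s)
      ((if s i then (1 : ℝ) else -1) • v i) with hg
  have hinv : Function.Involutive (fun s : Fin n → Bool => Function.update s i (!s i)) := by
    intro s; simp
  have h1 : ∑ s, g (Function.update s i (!s i)) = ∑ s, g s :=
    Equiv.sum_comp hinv.toPerm g
  have h2 : 0 ≤ ∑ s, (g s + g (Function.update s i (!s i))) := by
    refine Finset.sum_nonneg fun s _ => ?_
    have hm := aux_mono_s11 p hp (S s) (S (Function.update s i (!s i)))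
    have hfl := aux_flip_s11 v t i s
    rw [← hS, ← hS] at hfl
    rw [hfl,
      mul_smul, real_inner_smul_right] at hm
    have hm' := nonneg_of_mul_nonneg_right hm (by positivity)
    rw [inner_sub_left] at hm'
    have : g (Function.update s i (!s i)) =
      - inner ℝ (‖S (Function.update s i (!s i))‖ ^ (p - 2) • S (Function.update s i (!s i)))
      ((if s i then (1 : ℝ) else -1) • v i) := by
      rw [hg, ← inner_neg_right, ← neg_smul]
      cases h : s i <;> simp
    rw [this]
    linarith
  rw [Finset.sum_add_distrib, h1] at h2
  linarith

/-- For independent Rademacher signs `ε_1, …, ε_n` (modelled by the uniform measure on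
`{-1,1}^n`, encoded via `Fin n → Bool`), a real Hilbert space `H`, `p ≥ 1` and vectors
`v_1, …, v_n` in `H`, the function
`Φ(t) = log E‖e^{t_1}ε_1 v_1 + … + e^{t_n}ε_n v_n‖^p` is convex on `ℝ^n`. -/
theorem log_moment_rademacher_hilbert_convex (n : ℕ)
    {H : Type*} [NormedAddCommGroup H] [InnerProductSpace ℝ H]
    (p : ℝ) (hp : 1 ≤ p) (v : Fin n → H) :
    ConvexOn ℝ Set.univ (fun t : Fin n → ℝ =>
      Real.log ((2 ^ n : ℝ)⁻¹ *
        ∑ s : Fin n → Bool,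
          ‖∑ j, (Real.exp (t j) * (if s j then (1 : ℝ) else -1)) • v j‖ ^ p)) := by
  by_cases hv : ∀ j, v j = 0
  · simp only [hv, smul_zero]
    exact convexOn_const _ convex_univ
  push Not at hv
  obtain ⟨i₀, hi₀⟩ := hv
  have hp0 : 0 < p := by linarith
  set S : (Fin n → ℝ) → (Fin n → Bool) → H := fun t s =>
    ∑ j, (Real.exp (t j) * (if s j then (1 : ℝ) else -1)) • v j with hS
  set G : (Fin n → ℝ) → ℝ := fun t => ∑ s : Fin n → Bool, ‖S t s‖ ^ p with hG
  have hGpos : ∀ t, 0 < G t := by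
    intro t
    have hnn : ∀ s ∈ (Finset.univ : Finset (Fin n → Bool)), 0 ≤ ‖S t s‖ ^ p :=
      fun s _ => by positivity
    refine lt_of_le_of_ne (Finset.sum_nonneg hnn) fun h0 => ?_
    have hz := (Finset.sum_eq_zero_iff_of_nonneg hnn).1 h0.symm
    have hz' : ∀ s, S t s = 0 := by
      intro s
      have := hz s (Finset.mem_univ s)
      rw [Real.rpow_eq_zero (norm_nonneg _) hp0.ne'] at this
      exact norm_eq_zero.1 this
    have hf := aux_flip_s11 v t i₀ (fun _ => true)
    have e1 := hz' (fun _ => true)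
    have e2 := hz' (Function.update (fun _ => true) i₀ (!true))
    change S t (fun _ => true) - S t (Function.update (fun _ => true) i₀ (!true)) = _ at hf
    rw [e1, e2] at hf
    have hf' := hf.symm
    simp [hi₀] at hf'
  set N : (Fin n → ℝ) → ℝ := fun t => G t ^ (1 / p) with hN
  have hNpos : ∀ t, 0 < N t := fun t => Real.rpow_pos_of_pos (hGpos t) _
  have hNG : ∀ t, G t = N t ^ p := by
    intro t
    rw [hN, ← Real.rpow_mul (hGpos t).le, one_div_mul_cancel hp0.ne', Real.rpow_one]
  have hlog : ∀ t, Real.log ((2 ^ n : ℝ)⁻¹ * G t) =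
      Real.log ((2 ^ n : ℝ)⁻¹) + p * Real.log (N t) := by
    intro t
    rw [Real.log_mul (by positivity) (hGpos t).ne', hNG t, Real.log_rpow (hNpos t)]
  refine ⟨convex_univ, ?_⟩
  intro a _ b _ α β hα hβ hαβ
  change Real.log ((2 ^ n : ℝ)⁻¹ * G (α • a + β • b)) ≤
    α • Real.log ((2 ^ n : ℝ)⁻¹ * G a) + β • Real.log ((2 ^ n : ℝ)⁻¹ * G b)
  rw [hlog, hlog, hlog]
  set t := α • a + β • b with ht
  set c : Fin n → ℝ := fun i => ∑ s : Fin n → Bool, inner ℝ (‖S t s‖ ^ (p - 2) • S t s)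
      ((if s i then (1 : ℝ) else -1) • v i) with hc
  have hc0 : ∀ i, 0 ≤ c i := fun i => aux_coef p hp v t i (S t) (fun s => rfl)
  have hsum : ∀ u : Fin n → ℝ, ∑ s : Fin n → Bool, inner ℝ (‖S t s‖ ^ (p - 2) • S t s) (S u s)
      = ∑ i, Real.exp (u i) * c i := by
    intro u
    simp only [hc, Finset.mul_sum]
    rw [Finset.sum_comm]
    refine Finset.sum_congr rfl fun s _ => ?_
    conv_lhs => rw [show S u s = ∑ j, (Real.exp (u j) * (if s j then (1 : ℝ) else -1)) • v j from rfl]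
    rw [inner_sum]
    refine Finset.sum_congr rfl fun i _ => ?_
    rw [mul_smul, real_inner_smul_right]
  have hT : ∑ i, Real.exp (t i) * c i = N t ^ p := by
    rw [← hsum, ← hNG]
    exact Finset.sum_congr rfl fun s _ => aux_self p hp _
  have hle : ∀ u, ∑ i, Real.exp (u i) * c i ≤ N t ^ (p - 1) * N u := by
    intro u
    rw [← hsum]
    refine (Finset.sum_le_sum fun s _ => aux_norm p (S t s) (S u s)).trans ?_
    exact aux_young Finset.univ p hp (fun s => ‖S t s‖) (fun s => ‖S u s‖)
      (fun _ => norm_nonneg _) (fun _ => norm_nonneg _) _ _ (hNpos t) (hNpos u) (hNG t) (hNG u)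
  have hA := hNpos a
  have hB := hNpos b
  have hM : 0 < N a ^ α * N b ^ β := mul_pos (Real.rpow_pos_of_pos hA _) (Real.rpow_pos_of_pos hB _)
  have hexp : ∀ i, Real.exp (t i) ≤ N a ^ α * N b ^ β *
      (α * (Real.exp (a i) / N a) + β * (Real.exp (b i) / N b)) := by
    intro i
    have h := Real.geom_mean_le_arith_mean2_weighted hα hβ
      (p₁ := Real.exp (a i) / N a) (p₂ := Real.exp (b i) / N b) (by positivity) (by positivity) hαβ
    rw [Real.div_rpow (Real.exp_pos _).le hA.le, Real.div_rpow (Real.exp_pos _).le hB.le,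
      ← Real.exp_mul, ← Real.exp_mul] at h
    have e : Real.exp (t i) = Real.exp (a i * α) * Real.exp (b i * β) := by
      rw [← Real.exp_add]; congr 1; simp [ht]; ring
    have h1 := Real.rpow_pos_of_pos hA α
    have h2 := Real.rpow_pos_of_pos hB β
    calc Real.exp (t i) = N a ^ α * N b ^ β *
          (Real.exp (a i * α) / N a ^ α * (Real.exp (b i * β) / N b ^ β)) := by
          rw [e]; field_simp
      _ ≤ _ := mul_le_mul_of_nonneg_left h hM.le
  have hmain : N t ^ p ≤ N a ^ α * N b ^ β * N t ^ (p - 1) := by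
    calc N t ^ p = ∑ i, Real.exp (t i) * c i := hT.symm
      _ ≤ ∑ i, N a ^ α * N b ^ β *
          (α * (Real.exp (a i) / N a) + β * (Real.exp (b i) / N b)) * c i :=
        Finset.sum_le_sum fun i _ => mul_le_mul_of_nonneg_right (hexp i) (hc0 i)
      _ = N a ^ α * N b ^ β * (α / N a * ∑ i, Real.exp (a i) * c i
            + β / N b * ∑ i, Real.exp (b i) * c i) := by
        rw [Finset.mul_sum, Finset.mul_sum, ← Finset.sum_add_distrib, Finset.mul_sum]
        exact Finset.sum_congr rfl fun i _ => by ring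
      _ ≤ N a ^ α * N b ^ β * (α / N a * (N t ^ (p - 1) * N a)
            + β / N b * (N t ^ (p - 1) * N b)) := by
        refine mul_le_mul_of_nonneg_left (add_le_add ?_ ?_) hM.le
        · exact mul_le_mul_of_nonneg_left (hle a) (by positivity)
        · exact mul_le_mul_of_nonneg_left (hle b) (by positivity)
      _ = N a ^ α * N b ^ β * ((α + β) * N t ^ (p - 1)) := by
        congr 1
        field_simp
      _ = _ := by rw [hαβ, one_mul]
  have hfin : N t ≤ N a ^ α * N b ^ β := by
    have h1 := Real.rpow_pos_of_pos (hNpos t) (p - 1)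
    have h2 : N t ^ p = N t * N t ^ (p - 1) := by
      rw [mul_comm, ← Real.rpow_add_one (hNpos t).ne']; congr 1; ring
    rw [h2] at hmain
    exact le_of_mul_le_mul_right hmain h1
  have hl := Real.log_le_log (hNpos t) hfin
  rw [Real.log_mul (Real.rpow_pos_of_pos hA _).ne' (Real.rpow_pos_of_pos hB _).ne',
    Real.log_rpow hA, Real.log_rpow hB] at hl
  have hl' := mul_le_mul_of_nonneg_left hl hp0.le
  simp only [smul_eq_mul]
  have hβ' : β = 1 - α := by linarith
  rw [hβ'] at hl' ⊢
  linarith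
end

section
/- Let ε_1, …, ε_n be independent Rademacher random variables and let T_n = {x ∈ ℝ^n : x_1 ≥ x_2 ≥ … ≥ x_n ≥ 0}. There exists a finite subset A_n of T_n such that for every x ∈ ℝ₊^n, E| Σ_{j=1}^n x_j ε_j | = max_{a ∈ A_n, σ ∈ S_n} Σ_{j=1}^n a_j x_{σ(j)}, where the maximum is over all a ∈ A_n and all permutations σ of {1,…,n}. -/
open Finset

/-- The cone `T_n = {x ∈ ℝ^n : x_1 ≥ x_2 ≥ … ≥ x_n ≥ 0}` of nonincreasing
nonnegative sequences. -/
def Tcone (n : ℕ) : Set (Fin n → ℝ) :=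
  {x | (∀ i j : Fin n, i ≤ j → x j ≤ x i) ∧ ∀ i, 0 ≤ x i}

/-- The sign attached to a Boolean. -/
noncomputable def sg (b : Bool) : ℝ := if b then (1 : ℝ) else -1

/-- Coefficient vector attached to a choice of signs. -/
noncomputable def coefVec (n : ℕ) (η : (Fin n → Bool) → SignType) : Fin n → ℝ :=
  fun j => (2 ^ n : ℝ)⁻¹ * ∑ s : Fin n → Bool, (η s : ℝ) * sg (s j)

lemma sign_sum_nonneg {ι : Type*} [Fintype ι] (e : Equiv.Perm ι) (F G : ι → ℝ) (c : ℝ)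
    (hc : 0 ≤ c) (hG : ∀ s, G (e s) = - G s) (hF : ∀ s, F s - F (e s) = c * G s) :
    0 ≤ ∑ s, (SignType.sign (F s) : ℝ) * G s := by
  have h1 : ∑ s, (SignType.sign (F (e s)) : ℝ) * G (e s)
      = ∑ s, (SignType.sign (F s) : ℝ) * G s :=
    Equiv.sum_comp e (fun s => (SignType.sign (F s) : ℝ) * G s)
  have h2 : 0 ≤ ∑ s, ((SignType.sign (F s) : ℝ) * G s
      + (SignType.sign (F (e s)) : ℝ) * G (e s)) := by
    apply Finset.sum_nonneg
    intro s _
    rw [hG]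
    have hmono : ∀ a b : ℝ, a ≤ b → (SignType.sign a : ℝ) ≤ (SignType.sign b : ℝ) := by
      intro a b hab
      rcases lt_trichotomy a 0 with ha | ha | ha <;> rcases lt_trichotomy b 0 with hb | hb | hb <;>
        simp [ha, hb] <;> linarith
    rcases le_total 0 (G s) with h | h
    · have := hmono (F (e s)) (F s) (by nlinarith [hF s, mul_nonneg hc h])
      nlinarith
    · have := hmono (F s) (F (e s)) (by nlinarith [hF s, mul_nonneg hc (neg_nonneg.2 h)])
      nlinarith
  rw [Finset.sum_add_distrib, h1] at h2
  linarith

lemma coefVec_mem (n : ℕ) (y : Fin n → ℝ) (hy : y ∈ Tcone n) :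
    coefVec n (fun s => SignType.sign (∑ j, y j * sg (s j))) ∈ Tcone n := by
  obtain ⟨hanti, hpos⟩ := hy
  constructor
  · intro i j hij
    rcases eq_or_ne i j with rfl | hne
    · exact le_rfl
    unfold coefVec
    apply mul_le_mul_of_nonneg_left _ (by positivity)
    rw [← sub_nonneg, ← Finset.sum_sub_distrib]
    simp only [← mul_sub]
    refine sign_sum_nonneg (Equiv.arrowCongr (Equiv.swap i j) (Equiv.refl Bool))
      (fun s => ∑ j, y j * sg (s j)) (fun s => sg (s i) - sg (s j)) (y i - y j)
      (sub_nonneg.2 (hanti i j hij)) ?_ ?_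
    · intro s
      simp [Equiv.arrowCongr]
    · intro s
      have : ∑ k, y k * sg ((Equiv.arrowCongr (Equiv.swap i j) (Equiv.refl Bool)) s k)
          = ∑ k, y (Equiv.swap i j k) * sg (s k) := by
        rw [← Equiv.sum_comp (Equiv.swap i j)]
        simp [Equiv.arrowCongr]
      rw [this, ← Finset.sum_sub_distrib, Finset.sum_eq_add i j hne]
      · simp; ring
      · rintro k - ⟨h1, h2⟩
        rw [Equiv.swap_apply_of_ne_of_ne h1 h2]; simp
      · simp
      · simp
  · intro i
    unfold coefVec
    apply mul_nonneg (by positivity)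
    have hinv : Function.Involutive (fun s : Fin n → Bool => Function.update s i (!s i)) := by
      intro s; simp
    refine sign_sum_nonneg hinv.toPerm
      (fun s => ∑ j, y j * sg (s j)) (fun s => sg (s i)) (2 * y i)
      (by linarith [hpos i]) ?_ ?_
    · intro s
      cases h : s i <;> simp [sg, h]
    · intro s
      rw [← Finset.sum_sub_distrib, Finset.sum_eq_single i]
      · cases h : s i <;> simp [sg, h] <;> ring
      · intro k _ hk
        simp [Function.update_of_ne hk]
      · simp

lemma coefVec_dot (n : ℕ) (η : (Fin n → Bool) → SignType) (y : Fin n → ℝ) :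
    ∑ j, coefVec n η j * y j
      = (2 ^ n : ℝ)⁻¹ * ∑ s : Fin n → Bool, (η s : ℝ) * ∑ j, y j * sg (s j) := by
  simp only [coefVec, Finset.mul_sum, Finset.sum_mul]
  rw [Finset.sum_comm]
  refine Finset.sum_congr rfl fun s _ => Finset.sum_congr rfl fun j _ => by ring

lemma rad_perm (n : ℕ) (x : Fin n → ℝ) (σ : Equiv.Perm (Fin n)) :
    ∑ s : Fin n → Bool, |∑ j, x (σ j) * sg (s j)|
      = ∑ s : Fin n → Bool, |∑ j, x j * sg (s j)| := by
  rw [← Equiv.sum_comp (Equiv.arrowCongr σ (Equiv.refl Bool))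
    (fun s : Fin n → Bool => |∑ j, x j * sg (s j)|)]
  refine Finset.sum_congr rfl fun s _ => ?_
  rw [← Equiv.sum_comp σ (fun j => x j * sg ((Equiv.arrowCongr σ (Equiv.refl Bool)) s j))]
  simp [Equiv.arrowCongr]

theorem rademacher_L1_eq_max_of_linear_perm (n : ℕ) :
    ∃ A : Finset (Fin n → ℝ), (∀ a ∈ A, a ∈ Tcone n) ∧
      ∀ x : Fin n → ℝ, (∀ j, 0 ≤ x j) →
        IsGreatest
          ((fun pr : (Fin n → ℝ) × Equiv.Perm (Fin n) =>
              ∑ j, pr.1 j * x (pr.2 j)) ''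
            (↑A ×ˢ (Set.univ : Set (Equiv.Perm (Fin n)))))
          ((2 ^ n : ℝ)⁻¹ * ∑ s : Fin n → Bool,
            |∑ j, x j * (if s j then (1 : ℝ) else -1)|) := by
  classical
  refine ⟨(Finset.univ.image (coefVec n)).filter (fun a => a ∈ Tcone n), ?_, ?_⟩
  · intro a ha
    exact (Finset.mem_filter.1 ha).2
  intro x hx
  change IsGreatest _ ((2 ^ n : ℝ)⁻¹ * ∑ s : Fin n → Bool, |∑ j, x j * sg (s j)|)
  constructor
  · let σ : Equiv.Perm (Fin n) := Tuple.sort (fun j => - x j)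
    have hσ : ∀ i j : Fin n, i ≤ j → x (σ j) ≤ x (σ i) := by
      intro i j hij
      have := Tuple.monotone_sort (fun j => - x j) hij
      simp only [Function.comp] at this
      exact neg_le_neg_iff.1 this
    refine ⟨(coefVec n (fun s => SignType.sign (∑ j, x (σ j) * sg (s j))), σ), ⟨?_, trivial⟩, ?_⟩
    · rw [Finset.mem_coe, Finset.mem_filter]
      exact ⟨Finset.mem_image_of_mem _ (Finset.mem_univ _),
        coefVec_mem n (fun j => x (σ j)) ⟨hσ, fun i => hx _⟩⟩
    · dsimp only
      rw [coefVec_dot n _ (fun j => x (σ j)), ← rad_perm n x σ]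
      simp only [sign_mul_self]
  · rintro _ ⟨⟨a, σ⟩, ⟨ha, -⟩, rfl⟩
    rw [Finset.mem_coe, Finset.mem_filter, Finset.mem_image] at ha
    obtain ⟨⟨η, -, hη⟩, -⟩ := ha
    dsimp only at hη ⊢
    rw [← hη, coefVec_dot n η (fun j => x (σ j)), ← rad_perm n x σ]
    apply mul_le_mul_of_nonneg_left _ (by positivity)
    refine Finset.sum_le_sum fun s _ => ?_
    generalize (∑ j, x (σ j) * sg (s j)) = t
    cases η s
    · simp
    · simpa using neg_le_abs t
    · simpa using le_abs_self t
end
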